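/- arXiv:1402.4397 — 3 statements merged into one kernel-verified Lean document; each statement's English description precedes it below -/
import Mathlib

section
/- Let H and T be atomic cancellative monoids and let φ: H → T be an isoatomic weak transfer homomorphism, with extension φ_p to permutable factorizations. Then: (1) for permutable factorizations z, z' of H, z ∣_p z' if and only if φ_p(z) ∣_p φ_p(z'); (2) for a, b ∈ H, a ∣_p b if and only if φ(a) ∣_p φ(b); (3) ω_p(H, a) ≤ ω_p(T, φ(a)) and ω_p'(H, a) ≤ ω_p'(T, φ(a)) for all a ∈ H, with equality in both if T is commutative, in which case also ω_p(H) = ω_p(T) and ω_p'(H) = ω_p'(T); (4) t_p(a, x) = t_p(φ(a), φ_p(x)) for all a ∈ H and permutable factorizations x of H, and t_p(H) = t_p(T). -/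
def MAtom {H : Type*} [Monoid H] (u : H) : Prop :=
  ¬ IsUnit u ∧ ∀ a b : H, u = a * b → IsUnit a ∨ IsUnit b

def TAssoc {H : Type*} [Monoid H] (a b : H) : Prop :=
  ∃ ε η : Hˣ, b = (ε : H) * a * (η : H)

def Atomic (H : Type*) [Monoid H] : Prop :=
  ∀ a : H, ¬ IsUnit a → ∃ l : List H, l ≠ [] ∧ (∀ u ∈ l, MAtom u) ∧ a = l.prod

def T1Cond {H T : Type*} [Monoid H] [Monoid T] (φ : H →* T) : Prop :=
  (∀ t : T, ∃ (ε η : Tˣ) (a : H), t = (ε : T) * φ a * (η : T)) ∧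
    ∀ a : H, IsUnit (φ a) ↔ IsUnit a

def IsTransferHom {H T : Type*} [Monoid H] [Monoid T] (φ : H →* T) : Prop :=
  T1Cond φ ∧
    ∀ (a : H) (b₁ b₂ : T), φ a = b₁ * b₂ →
      ∃ (a₁ a₂ : H) (ε : Tˣ), a = a₁ * a₂ ∧ φ a₁ = b₁ * ((ε⁻¹ : Tˣ) : T) ∧ φ a₂ = (ε : T) * b₂

def IsWeakTransferHom {H T : Type*} [Monoid H] [Monoid T] (φ : H →* T) : Prop :=
  T1Cond φ ∧
    ∀ (a : H) (n : ℕ), 0 < n → ∀ v : Fin n → T, (∀ i, MAtom (v i)) →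
      φ a = (List.ofFn v).prod →
      ∃ (u : Fin n → H) (σ : Equiv.Perm (Fin n)),
        (∀ i, MAtom (u i)) ∧ a = (List.ofFn u).prod ∧ ∀ i, TAssoc (φ (u i)) (v (σ i))

def IsIsoatomic {H T : Type*} [Monoid H] [Monoid T] (φ : H →* T) : Prop :=
  ∀ u v : H, MAtom u → MAtom v → TAssoc (φ u) (φ v) → TAssoc u v

def lengthsOf {H : Type*} [Monoid H] (a : H) : Set ℕ :=
  {n | (n = 0 ∧ IsUnit a) ∨
    ∃ l : List H, l ≠ [] ∧ (∀ u ∈ l, MAtom u) ∧ a = l.prod ∧ l.length = n}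
structure RF (H : Type*) [Monoid H] where
  u : Hˣ
  l : List H

namespace RF

variable {H : Type*} [Monoid H]

def IsRigid (z : RF H) : Prop := ∀ x ∈ z.l, MAtom x

def prod (z : RF H) : H := (z.u : H) * z.l.prod

def len (z : RF H) : ℕ := z.l.length

def mul (z w : RF H) : RF H :=
  match z.l with
  | [] => ⟨z.u * w.u, w.l⟩
  | a :: as =>
      ⟨z.u, ((a :: as).dropLast ++
        [(a :: as).getLast (List.cons_ne_nil a as) * (w.u : H)]) ++ w.l⟩

end RF

/-- The equivalence relation on rigid factorization data: same length, and the
atoms agree up to an interpolating family of units `δ`, with the unit part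
absorbing `δ 0` and `δ` becoming trivial after the last atom. -/
def RFEq {H : Type*} [Monoid H] (z w : RF H) : Prop :=
  ∃ δ : ℕ → Hˣ,
    z.l.length = w.l.length ∧ δ z.l.length = 1 ∧ w.u = z.u * (δ 0)⁻¹ ∧
    ∀ (i : ℕ) (hi : i < z.l.length) (hi' : i < w.l.length),
      w.l.get ⟨i, hi'⟩ = ((δ i : H)) * z.l.get ⟨i, hi⟩ * (((δ (i + 1))⁻¹ : Hˣ) : H)

/-- A distance on the rigid factorizations of `H` (axioms (D1)-(D5); (D1) is stated
in the strong form saying the distance vanishes on equivalent rigid factorizations,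
which encodes well-definedness on the category of rigid factorizations). -/
structure IsDistance (H : Type*) [Monoid H] (d : RF H → RF H → ℕ) : Prop where
  d_eq : ∀ z w : RF H, z.IsRigid → w.IsRigid → RFEq z w → d z w = 0
  d_symm : ∀ z w : RF H, z.IsRigid → w.IsRigid → z.prod = w.prod → d z w = d w z
  d_tri : ∀ z w v : RF H, z.IsRigid → w.IsRigid → v.IsRigid →
    z.prod = w.prod → w.prod = v.prod → d z v ≤ d z w + d w v
  d_mul_left : ∀ x z w : RF H, x.IsRigid → z.IsRigid → w.IsRigid → z.prod = w.prod →
    d (x.mul z) (x.mul w) = d z w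
  d_mul_right : ∀ y z w : RF H, y.IsRigid → z.IsRigid → w.IsRigid → z.prod = w.prod →
    d (z.mul y) (w.mul y) = d z w
  d_len : ∀ z w : RF H, z.IsRigid → w.IsRigid → z.prod = w.prod →
    (z.len - w.len ≤ d z w ∧ w.len - z.len ≤ d z w) ∧ d z w ≤ max (max z.len w.len) 1

/-- An `N`-chain of rigid factorizations of `a` between `z` and `w`, in distance `d`. -/
def IsNChain {H : Type*} [Monoid H] (d : RF H → RF H → ℕ) (a : H) (N : ℕ∞)
    (z w : RF H) : Prop :=
  ∃ (n : ℕ) (c : ℕ → RF H), c 0 = z ∧ c n = w ∧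
    (∀ i ≤ n, (c i).IsRigid ∧ (c i).prod = a) ∧
    ∀ i < n, (d (c i) (c (i + 1)) : ℕ∞) ≤ N

/-- A monotone `N`-chain: in addition the lengths are non-decreasing or non-increasing. -/
def IsMonNChain {H : Type*} [Monoid H] (d : RF H → RF H → ℕ) (a : H) (N : ℕ∞)
    (z w : RF H) : Prop :=
  ∃ (n : ℕ) (c : ℕ → RF H), c 0 = z ∧ c n = w ∧
    (∀ i ≤ n, (c i).IsRigid ∧ (c i).prod = a) ∧
    (∀ i < n, (d (c i) (c (i + 1)) : ℕ∞) ≤ N) ∧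
    ((∀ i j, i ≤ j → j ≤ n → (c i).len ≤ (c j).len) ∨
      (∀ i j, i ≤ j → j ≤ n → (c j).len ≤ (c i).len))

/-- The catenary degree of `a` in distance `d`. -/
noncomputable def catenaryDeg {H : Type*} [Monoid H] (d : RF H → RF H → ℕ) (a : H) : ℕ∞ :=
  sInf {N : ℕ∞ | ∀ z w : RF H, z.IsRigid → w.IsRigid → z.prod = a → w.prod = a →
    IsNChain d a N z w}

/-- The monotone catenary degree of `a` in distance `d`. -/
noncomputable def catenaryDegMon {H : Type*} [Monoid H] (d : RF H → RF H → ℕ) (a : H) : ℕ∞ :=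
  sInf {N : ℕ∞ | ∀ z w : RF H, z.IsRigid → w.IsRigid → z.prod = a → w.prod = a →
    IsMonNChain d a N z w}

/-- The set of distances of a set of naturals. -/
def DeltaSet (L : Set ℕ) : Set ℕ :=
  {d | 0 < d ∧ ∃ l ∈ L, l + d ∈ L ∧ ∀ m ∈ L, l < m → m < l + d → False}
/-- Two-sided associativity is an equivalence relation. -/
def assocSetoid (H : Type*) [Monoid H] : Setoid H where
  r := TAssoc
  iseqv := by
    constructor
    · intro a; exact ⟨1, 1, by simp⟩
    · rintro a b ⟨ε, η, rfl⟩
      exact ⟨ε⁻¹, η⁻¹, by simp [mul_assoc]⟩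
    · rintro a b c ⟨ε, η, rfl⟩ ⟨ε', η', rfl⟩
      exact ⟨ε' * ε, η * η', by simp [mul_assoc]⟩

/-- Associativity classes of elements of `H`. -/
def AClass (H : Type*) [Monoid H] := Quotient (assocSetoid H)

def mkCls {H : Type*} [Monoid H] (a : H) : AClass H := Quotient.mk (assocSetoid H) a

/-- The distance between two multisets: `max {card s - card (s ∩ t), card t - card (s ∩ t)}`. -/
noncomputable def mdist {α : Type*} (s t : Multiset α) : ℕ :=
  letI := Classical.decEq α
  max (Multiset.card s - Multiset.card (s ∩ t)) (Multiset.card t - Multiset.card (s ∩ t))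

/-- The multiset of associativity classes of the entries of a list. -/
def clsList {H : Type*} [Monoid H] (l : List H) : Multiset (AClass H) :=
  ((l.map mkCls : List (AClass H)) : Multiset (AClass H))

/-- The permutable distance between two rigid factorizations. -/
noncomputable def dpRF {H : Type*} [Monoid H] (z w : RF H) : ℕ :=
  mdist (clsList z.l) (clsList w.l)

/-- The permutable catenary degree of an element. -/
noncomputable def cpDeg {H : Type*} [Monoid H] (a : H) : ℕ∞ :=
  sInf {N : ℕ∞ | ∀ z w : RF H, z.IsRigid → w.IsRigid → z.prod = a → w.prod = a →
    ∃ (n : ℕ) (c : ℕ → RF H), c 0 = z ∧ c n = w ∧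
      (∀ i ≤ n, (c i).IsRigid ∧ (c i).prod = a) ∧
      ∀ i < n, (dpRF (c i) (c (i + 1)) : ℕ∞) ≤ N}

/-- The permutable catenary degree of a monoid. -/
noncomputable def cpMon (H : Type*) [Monoid H] : ℕ∞ := ⨆ a : H, cpDeg a

/-- The map induced on rigid factorization data by a monoid homomorphism. -/
def mapRF {H T : Type*} [Monoid H] [Monoid T] (φ : H →* T) (z : RF H) : RF T :=
  ⟨Units.map φ z.u, z.l.map φ⟩
/-- Divisibility up to permutation: `a ∣_p b`. -/
def dvdP {H : Type*} [Monoid H] (a b : H) : Prop :=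
  ∃ (k l : ℕ) (u : Fin k → H) (v : Fin l → H),
    (∀ i, MAtom (u i)) ∧ (∀ j, MAtom (v j)) ∧
    TAssoc a (List.ofFn u).prod ∧ TAssoc b (List.ofFn v).prod ∧
    ∃ σ : Fin k ↪ Fin l, ∀ i, TAssoc (u i) (v (σ i))

/-- An almost prime-like element (with respect to `∣_p`). -/
def APLike {H : Type*} [Monoid H] (q : H) : Prop :=
  ¬ IsUnit q ∧ ∀ a b : H, dvdP q (a * b) → dvdP q a ∨ dvdP q b

/-- The number of entries of `l` associated to `q`. -/
noncomputable def countAssoc {H : Type*} [Monoid H] (l : List H) (q : H) : ℕ :=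
  Nat.card {i : Fin l.length // TAssoc (l.get i) q}

/-- The `q`-adic valuation of `a`: the set of numbers of occurrences (up to associativity)
of `q` in factorizations of `a` into atoms. -/
def Vq {H : Type*} [Monoid H] (q a : H) : Set ℕ :=
  {n | ∃ l : List H, (∀ u ∈ l, MAtom u) ∧ TAssoc a l.prod ∧ countAssoc l q = n}

/-- A prime-like element: almost prime-like, with singleton `q`-adic valuations. -/
def PrimeLike {H : Type*} [Monoid H] (q : H) : Prop :=
  APLike q ∧ ∀ a : H, ∃ n : ℕ, Vq q a = {n}

/-- `H` is permutably factorial. -/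
def PermutablyFactorial (H : Type*) [Monoid H] : Prop :=
  Atomic H ∧
    ∀ (k l : ℕ) (u : Fin k → H) (v : Fin l → H),
      (∀ i, MAtom (u i)) → (∀ j, MAtom (v j)) →
      (List.ofFn u).prod = (List.ofFn v).prod →
      ∃ σ : Fin k ≃ Fin l, ∀ i, TAssoc (u i) (v (σ i))
/-- The `ω_p`-invariant of the pair `(a, b)` (factorizations of `a` into atoms). -/
noncomputable def omegaEl {H : Type*} [Monoid H] (a b : H) : ℕ∞ :=
  sInf {N : ℕ∞ | ∀ (n : ℕ) (u : Fin n → H), (∀ i, MAtom (u i)) →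
    a = (List.ofFn u).prod → dvdP b a →
    ∃ k : ℕ, (k : ℕ∞) ≤ N ∧ ∃ σ : Fin k ↪ Fin n,
      dvdP b (List.ofFn fun i => u (σ i)).prod}

/-- The `ω_p'`-invariant of the pair `(a, b)` (products of arbitrary elements). -/
noncomputable def omegaEl' {H : Type*} [Monoid H] (a b : H) : ℕ∞ :=
  sInf {N : ℕ∞ | ∀ (n : ℕ) (u : Fin n → H),
    a = (List.ofFn u).prod → dvdP b a →
    ∃ k : ℕ, (k : ℕ∞) ≤ N ∧ ∃ σ : Fin k ↪ Fin n,
      dvdP b (List.ofFn fun i => u (σ i)).prod}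

noncomputable def omegaH {H : Type*} [Monoid H] (b : H) : ℕ∞ := ⨆ a : H, omegaEl a b

noncomputable def omegaH' {H : Type*} [Monoid H] (b : H) : ℕ∞ := ⨆ a : H, omegaEl' a b

noncomputable def omegaMon (H : Type*) [Monoid H] : ℕ∞ :=
  ⨆ (u : H) (_ : MAtom u), omegaH u

noncomputable def omegaMon' (H : Type*) [Monoid H] : ℕ∞ :=
  ⨆ (u : H) (_ : MAtom u), omegaH' u
/-- Permutable factorizations of `a`, represented as multisets of associativity
classes of atoms realizing `a` (up to a unit). -/
def ZpSet {H : Type*} [Monoid H] (a : H) : Set (Multiset (AClass H)) :=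
  {s | ∃ (ε : Hˣ) (l : List H), (∀ u ∈ l, MAtom u) ∧ a = (ε : H) * l.prod ∧ s = clsList l}

/-- The permutable tame degree `t_p(a, x)`. -/
noncomputable def tpEl {H : Type*} [Monoid H] (a : H) (x : Multiset (AClass H)) : ℕ∞ :=
  sInf {N : ℕ∞ | (∃ z₀ ∈ ZpSet a, x ≤ z₀) →
    ∀ z ∈ ZpSet a, ∃ z' ∈ ZpSet a, x ≤ z' ∧ (mdist z z' : ℕ∞) ≤ N}

/-- The permutable tame degree `t_p(H)`. -/
noncomputable def tpMon (H : Type*) [Monoid H] : ℕ∞ :=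
  ⨆ (u : H) (_ : MAtom u) (a : H), tpEl a {mkCls u}

/-- The permutable tame degree `t_p(H, Z_p(H))`. -/
noncomputable def tpZpMon (H : Type*) [Monoid H] : ℕ∞ :=
  ⨆ (a : H) (x : Multiset (AClass H)) (_ : ∃ b : H, x ∈ ZpSet b), tpEl a x

/-- The map induced on associativity classes by a monoid homomorphism. -/
def mapCls {H T : Type*} [Monoid H] [Monoid T] (φ : H →* T) : AClass H → AClass T :=
  Quotient.lift (fun a => mkCls (φ a)) (by
    rintro a b ⟨ε, η, rfl⟩
    exact Quotient.sound ⟨Units.map φ ε, Units.map φ η, by simp⟩)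

section IsoatomicHelpers

theorem tassoc_refl {H : Type*} [Monoid H] (a : H) : TAssoc a a :=
  (assocSetoid H).iseqv.refl a

theorem tassoc_symm {H : Type*} [Monoid H] {a b : H} (h : TAssoc a b) : TAssoc b a :=
  (assocSetoid H).iseqv.symm h

theorem tassoc_trans {H : Type*} [Monoid H] {a b c : H} (h : TAssoc a b) (h' : TAssoc b c) :
    TAssoc a c :=
  (assocSetoid H).iseqv.trans h h'

theorem mkCls_eq_iff {H : Type*} [Monoid H] {a b : H} : mkCls a = mkCls b ↔ TAssoc a b :=
  ⟨fun h => Quotient.exact h, fun h => Quotient.sound h⟩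

theorem mapCls_mkCls {H T : Type*} [Monoid H] [Monoid T] (φ : H →* T) (a : H) :
    mapCls φ (mkCls a) = mkCls (φ a) := rfl

theorem tassoc_map {H T : Type*} [Monoid H] [Monoid T] (φ : H →* T) {a b : H}
    (h : TAssoc a b) : TAssoc (φ a) (φ b) := by
  obtain ⟨ε, η, rfl⟩ := h
  exact ⟨Units.map φ ε, Units.map φ η, by simp⟩

theorem matom_units_mul {H : Type*} [Monoid H] {u : H} (h : MAtom u) (ε : Hˣ) :
    MAtom ((ε : H) * u) := by
  refine ⟨fun hu => h.1 ((Units.isUnit_units_mul ε u).1 hu), fun a b hab => ?_⟩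
  have h2 : u = ((ε⁻¹ : Hˣ) : H) * a * b := by
    rw [mul_assoc, ← hab, ← mul_assoc]; simp
  rcases h.2 _ _ h2 with h3 | h3
  · exact Or.inl ((Units.isUnit_units_mul _ _).1 h3)
  · exact Or.inr h3

theorem matom_mul_units {H : Type*} [Monoid H] {u : H} (h : MAtom u) (ε : Hˣ) :
    MAtom (u * (ε : H)) := by
  refine ⟨fun hu => h.1 ((Units.isUnit_mul_units u ε).1 hu), fun a b hab => ?_⟩
  have h2 : u = a * (b * ((ε⁻¹ : Hˣ) : H)) := by
    rw [← mul_assoc, ← hab, mul_assoc]; simp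
  rcases h.2 _ _ h2 with h3 | h3
  · exact Or.inl h3
  · exact Or.inr ((Units.isUnit_mul_units _ _).1 h3)

theorem matom_of_tassoc {H : Type*} [Monoid H] {u v : H} (h : TAssoc u v) (hu : MAtom u) :
    MAtom v := by
  obtain ⟨ε, η, rfl⟩ := h
  exact matom_mul_units (matom_units_mul hu ε) η

theorem exists_mul_unit {H : Type*} [Monoid H] (l : List H) (hl : ∀ u ∈ l, MAtom u) :
    ∀ η : Hˣ, ∃ (ε : Hˣ) (l' : List H), (∀ u ∈ l', MAtom u) ∧
      l.prod * (η : H) = (ε : H) * l'.prod ∧ clsList l' = clsList l := by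
  induction l with
  | nil => intro η; exact ⟨η, [], by simp, by simp, rfl⟩
  | cons u l ih =>
    intro η
    obtain ⟨ε, l', h1, h2, h3⟩ := ih (fun v hv => hl v (by simp [hv])) η
    refine ⟨1, (u * (ε : H)) :: l', ?_, ?_, ?_⟩
    · intro v hv
      rcases List.mem_cons.1 hv with rfl | hv
      · exact matom_mul_units (hl u (by simp)) ε
      · exact h1 v hv
    · simp [mul_assoc, h2]
    · have : mkCls (u * (ε : H)) = mkCls u :=
        mkCls_eq_iff.2 (tassoc_symm ⟨1, ε, by simp⟩)
      simp only [clsList, List.map_cons, this] at h3 ⊢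
      rw [← Multiset.cons_coe, ← Multiset.cons_coe, h3]

theorem zpSet_sub_of_tassoc {H : Type*} [Monoid H] {a b : H} (h : TAssoc a b) :
    ZpSet a ⊆ ZpSet b := by
  obtain ⟨δ, η, rfl⟩ := h
  rintro s ⟨ε, l, hl, rfl, rfl⟩
  obtain ⟨ε', l', h1, h2, h3⟩ := exists_mul_unit l hl η
  refine ⟨δ * ε * ε', l', h1, ?_, h3.symm⟩
  simp only [Units.val_mul, mul_assoc, ← h2]

theorem zpSet_congr {H : Type*} [Monoid H] {a b : H} (h : TAssoc a b) : ZpSet a = ZpSet b :=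
  Set.Subset.antisymm (zpSet_sub_of_tassoc h) (zpSet_sub_of_tassoc (tassoc_symm h))

theorem clsList_ofFn {H : Type*} [Monoid H] {n : ℕ} (u : Fin n → H) :
    clsList (List.ofFn u) = (Finset.univ : Finset (Fin n)).val.map (fun i => mkCls (u i)) := by
  simp [clsList, List.map_ofFn, Fin.univ_val_map, Function.comp_def]

theorem clsList_map {H T : Type*} [Monoid H] [Monoid T] (φ : H →* T) (l : List H) :
    clsList (l.map φ) = (clsList l).map (mapCls φ) := by
  simp [clsList, Function.comp_def, mapCls_mkCls]

theorem dvdP_iff {H : Type*} [Monoid H] {a b : H} :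
    dvdP a b ↔ ∃ s ∈ ZpSet a, ∃ t ∈ ZpSet b, s ≤ t := by
  constructor
  · rintro ⟨k, l, u, v, hu, hv, ha, hb, σ, hσ⟩
    refine ⟨clsList (List.ofFn u), ?_, clsList (List.ofFn v), ?_, ?_⟩
    · rw [zpSet_congr ha]
      exact ⟨1, List.ofFn u, by simpa [List.mem_ofFn] using hu, by simp, rfl⟩
    · rw [zpSet_congr hb]
      exact ⟨1, List.ofFn v, by simpa [List.mem_ofFn] using hv, by simp, rfl⟩
    · rw [clsList_ofFn, clsList_ofFn]
      have h1 : (fun i => mkCls (u i)) = (fun j => mkCls (v j)) ∘ σ := by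
        funext i; exact mkCls_eq_iff.2 (hσ i)
      rw [h1, ← Multiset.map_map, ← Finset.map_val]
      exact Multiset.map_le_map (Finset.val_le_iff.2 (Finset.subset_univ _))
  · rintro ⟨s, ⟨ε, l, hl, ha, rfl⟩, t, ⟨δ, m, hm, hb, rfl⟩, hst⟩
    classical
    have hsub : (l.map mkCls).Subperm (m.map mkCls) := hst
    refine ⟨l.length, m.length, l.get, m.get, fun i => hl _ (l.get_mem i),
      fun i => hm _ (m.get_mem i), ?_, ?_, ?_⟩
    · rw [List.ofFn_get]; exact tassoc_symm ⟨ε, 1, by simp [ha]⟩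
    · rw [List.ofFn_get]; exact tassoc_symm ⟨δ, 1, by simp [hb]⟩
    · refine ⟨⟨fun i => (hsub.idxInj (i.cast (by simp))).cast (by simp), ?_⟩, ?_⟩
      · intro i j hij
        have h2 := (Fin.cast_injective _ hij)
        have h3 := hsub.idxInj_injective h2
        exact Fin.cast_injective _ h3
      · intro i
        apply mkCls_eq_iff.1
        have := hsub.getElem_idxInj_eq_getElem (i := i.cast (by simp))
        simp only [List.getElem_map] at this
        exact this.symm

theorem dvdP_congr {H : Type*} [Monoid H] {a b a' b' : H} (h : TAssoc a a') (h' : TAssoc b b') :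
    dvdP a b ↔ dvdP a' b' := by
  rw [dvdP_iff, dvdP_iff, zpSet_congr h, zpSet_congr h']

/-- Atom classes. -/
def atomCls (H : Type*) [Monoid H] : Set (AClass H) := {c | ∃ u : H, MAtom u ∧ mkCls u = c}

theorem mem_atomCls {H : Type*} [Monoid H] {a : H} {s : Multiset (AClass H)} (h : s ∈ ZpSet a) :
    ∀ c ∈ s, c ∈ atomCls H := by
  obtain ⟨ε, l, hl, rfl, rfl⟩ := h
  intro c hc
  simp only [clsList, Multiset.mem_coe, List.mem_map] at hc
  obtain ⟨u, hu, rfl⟩ := hc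
  exact ⟨u, hl u hu, rfl⟩

theorem isUnit_left_of_mul {H : Type*} [CancelMonoid H] {a b : H} (h : IsUnit (a * b)) :
    IsUnit a := by
  obtain ⟨w, hw⟩ := h
  have h1 : a * (b * ((w⁻¹ : Hˣ) : H)) = 1 := by rw [← mul_assoc, ← hw]; simp
  have h2 : (b * ((w⁻¹ : Hˣ) : H)) * a = 1 := by
    apply mul_left_cancel (a := a)
    rw [← mul_assoc, h1]; simp
  exact ⟨⟨a, _, h1, h2⟩, rfl⟩

theorem matom_of_atom_prod {H : Type*} [CancelMonoid H] {u : H} (hu : MAtom u) (l : List H)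
    (hl : ∀ v ∈ l, MAtom v) (h : u = l.prod) : l = [u] := by
  match l with
  | [] => exact absurd (by simp [h]) hu.1
  | [v] => simp at h; simp [h]
  | v :: w :: l =>
    exfalso
    rw [List.prod_cons] at h
    rcases hu.2 _ _ h with h1 | h1
    · exact (hl v (by simp)).1 h1
    · rw [List.prod_cons] at h1
      exact (hl w (by simp)).1 (isUnit_left_of_mul h1)

section Hom
variable {H T : Type*} [CancelMonoid H] [CancelMonoid T]

theorem map_matom (hT : Atomic T) (φ : H →* T) (hw : IsWeakTransferHom φ)
    {u : H} (hu : MAtom u) : MAtom (φ u) := by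
  obtain ⟨l, hne, hl, h⟩ := hT (φ u) (fun h => hu.1 ((hw.1.2 u).1 h))
  obtain ⟨w, σ, h1, h2, h3⟩ := hw.2 u l.length (List.length_pos_iff.2 hne) l.get
    (fun i => hl _ (l.get_mem i)) (by rw [List.ofFn_get]; exact h)
  have h4 := matom_of_atom_prod hu (List.ofFn w) (by simpa [List.mem_ofFn] using h1) h2
  have h5 : l.length = 1 := by simpa using congrArg List.length h4
  obtain ⟨v, rfl⟩ := List.length_eq_one_iff.1 h5
  rw [h]; simpa using hl

theorem exists_atom_lift (φ : H →* T) (hw : IsWeakTransferHom φ)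
    {v : T} (hv : MAtom v) : ∃ u : H, MAtom u ∧ TAssoc (φ u) v := by
  obtain ⟨ε, η, a, h⟩ := hw.1.1 v
  have h0 : TAssoc (φ a) v := ⟨ε, η, h⟩
  obtain ⟨w, σ, h1, h2, h3⟩ := hw.2 a 1 one_pos (fun _ => φ a)
    (fun _ => matom_of_tassoc (tassoc_symm h0) hv) (by simp)
  exact ⟨w 0, h1 0, tassoc_trans (h3 0) h0⟩

theorem exists_lift (φ : H →* T) (hw : IsWeakTransferHom φ) (t : T) :
    ∃ a : H, TAssoc (φ a) t := by
  obtain ⟨ε, η, a, h⟩ := hw.1.1 t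
  exact ⟨a, ε, η, h⟩

theorem zpSet_map (hT : Atomic T) (φ : H →* T) (hw : IsWeakTransferHom φ) (a : H) :
    ZpSet (φ a) = (Multiset.map (mapCls φ)) '' ZpSet a := by
  apply Set.Subset.antisymm
  · rintro s ⟨ε, l, hl, ha, rfl⟩
    cases l with
    | nil =>
      have : IsUnit (φ a) := by rw [ha]; simp
      obtain ⟨w, hw'⟩ := (hw.1.2 a).1 this
      exact ⟨0, ⟨w, [], by simp, by simp [hw'], rfl⟩, rfl⟩
    | cons v l =>
      have hcls : clsList (((ε : T) * v) :: l) = clsList (v :: l) := by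
        have : mkCls ((ε : T) * v) = mkCls v :=
          mkCls_eq_iff.2 (tassoc_symm ⟨ε, 1, by simp⟩)
        simp [clsList, this]
      rw [← hcls]
      have hl' : ∀ x ∈ (((ε : T) * v) :: l), MAtom x := by
        intro x hx
        rcases List.mem_cons.1 hx with rfl | hx
        · exact matom_units_mul (hl v (by simp)) ε
        · exact hl x (by simp [hx])
      have ha' : φ a = (((ε : T) * v) :: l).prod := by rw [ha]; simp [mul_assoc]
      generalize hL : (((ε : T) * v) :: l) = L at *
      have hpos : 0 < L.length := by rw [← hL]; simp
      obtain ⟨w, σ, h1, h2, h3⟩ := hw.2 a L.length hpos L.get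
        (fun i => hl' _ (L.get_mem i)) (by rw [List.ofFn_get]; exact ha')
      refine ⟨clsList (List.ofFn w), ⟨1, List.ofFn w, by simpa [List.mem_ofFn] using h1,
        by simpa using h2, rfl⟩, ?_⟩
      conv_rhs => rw [← List.ofFn_get L]
      rw [clsList_ofFn, clsList_ofFn, Multiset.map_map]
      have h4 : (mapCls φ ∘ fun i => mkCls (w i)) = (fun j => mkCls (L.get j)) ∘ σ := by
        funext i; exact mkCls_eq_iff.2 (h3 i)
      rw [h4, ← Multiset.map_map]
      congr 1
      exact congrArg Finset.val (Finset.map_univ_equiv σ)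
  · rintro _ ⟨s, ⟨ε, l, hl, rfl, rfl⟩, rfl⟩
    refine ⟨Units.map φ ε, l.map φ, ?_, by simp [map_list_prod], (clsList_map φ l).symm⟩
    intro x hx
    obtain ⟨u, hu, rfl⟩ := List.mem_map.1 hx
    exact map_matom hT φ hw (hl u hu)

theorem exists_leftInv (φ : H →* T) (hi : IsIsoatomic φ) :
    ∃ g : AClass T → AClass H, ∀ c ∈ atomCls H, g (mapCls φ c) = c := by
  have hinj : Set.InjOn (mapCls φ) (atomCls H) := by
    rintro _ ⟨u, hu, rfl⟩ _ ⟨v, hv, rfl⟩ h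
    exact mkCls_eq_iff.2 (hi u v hu hv (mkCls_eq_iff.1 h))
  haveI : Nonempty (AClass H) := ⟨mkCls 1⟩
  exact ⟨Function.invFunOn (mapCls φ) (atomCls H), fun c hc => hinj.leftInvOn_invFunOn hc⟩

theorem map_map_leftInv {α β : Type*} {f : α → β} {g : β → α} {s : Multiset α}
    (h : ∀ c ∈ s, g (f c) = c) : (s.map f).map g = s := by
  rw [Multiset.map_map]
  conv_rhs => rw [← Multiset.map_id s]
  exact Multiset.map_congr rfl h

theorem map_le_map_iff_leftInv {α β : Type*} {f : α → β} {g : β → α} {s t : Multiset α}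
    (hs : ∀ c ∈ s, g (f c) = c) (ht : ∀ c ∈ t, g (f c) = c) :
    s ≤ t ↔ s.map f ≤ t.map f := by
  refine ⟨fun h => Multiset.map_le_map h, fun h => ?_⟩
  have := Multiset.map_le_map (f := g) h
  rwa [map_map_leftInv hs, map_map_leftInv ht] at this

theorem mdist_map {α β : Type*} {f : α → β} {g : β → α} {s t : Multiset α}
    (hs : ∀ c ∈ s, g (f c) = c) (ht : ∀ c ∈ t, g (f c) = c) :
    mdist (s.map f) (t.map f) = mdist s t := by
  classical
  have h1 : Multiset.card (s ∩ t) = Multiset.card (s.map f ∩ t.map f) := by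
    apply le_antisymm
    · have : (s ∩ t).map f ≤ s.map f ∩ t.map f :=
        Multiset.le_inter (Multiset.map_le_map Multiset.inter_le_left)
          (Multiset.map_le_map Multiset.inter_le_right)
      simpa using Multiset.card_le_card this
    · have h2 := Multiset.map_le_map (f := g)
        (Multiset.inter_le_left (s := s.map f) (t := t.map f))
      have h3 := Multiset.map_le_map (f := g)
        (Multiset.inter_le_right (s := s.map f) (t := t.map f))
      rw [map_map_leftInv hs] at h2
      rw [map_map_leftInv ht] at h3
      simpa using Multiset.card_le_card (Multiset.le_inter h2 h3)
  unfold mdist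
  simp only [Multiset.card_map]
  convert (congrArg (fun n => max (Multiset.card s - n) (Multiset.card t - n)) h1.symm) using 3

theorem dvdP_map_iff (hT : Atomic T) (φ : H →* T) (hw : IsWeakTransferHom φ)
    (hi : IsIsoatomic φ) (a b : H) : dvdP a b ↔ dvdP (φ a) (φ b) := by
  obtain ⟨g, hg⟩ := exists_leftInv φ hi
  rw [dvdP_iff, dvdP_iff, zpSet_map hT φ hw, zpSet_map hT φ hw]
  simp only [Set.exists_mem_image]
  constructor
  · rintro ⟨s, hs, t, ht, h⟩
    exact ⟨s, hs, t, ht, Multiset.map_le_map h⟩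
  · rintro ⟨s, hs, t, ht, h⟩
    exact ⟨s, hs, t, ht, (map_le_map_iff_leftInv (fun c hc => hg c (mem_atomCls hs c hc))
      (fun c hc => hg c (mem_atomCls ht c hc))).2 h⟩

theorem tpEl_map (hT : Atomic T) (φ : H →* T) (hw : IsWeakTransferHom φ)
    (hi : IsIsoatomic φ) (a : H) (x : Multiset (AClass H)) (hx : ∀ c ∈ x, c ∈ atomCls H) :
    tpEl a x = tpEl (φ a) (x.map (mapCls φ)) := by
  obtain ⟨g, hg⟩ := exists_leftInv φ hi
  have hle : ∀ z ∈ ZpSet a, (x.map (mapCls φ) ≤ z.map (mapCls φ) ↔ x ≤ z) := fun z hz =>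
    (map_le_map_iff_leftInv (fun c hc => hg c (hx c hc))
      (fun c hc => hg c (mem_atomCls hz c hc))).symm
  have hd : ∀ z ∈ ZpSet a, ∀ z' ∈ ZpSet a,
      mdist (z.map (mapCls φ)) (z'.map (mapCls φ)) = mdist z z' := fun z hz z' hz' =>
    mdist_map (fun c hc => hg c (mem_atomCls hz c hc)) (fun c hc => hg c (mem_atomCls hz' c hc))
  unfold tpEl
  rw [zpSet_map hT φ hw]
  simp only [Set.exists_mem_image, Set.forall_mem_image]
  congr 1
  ext N
  simp only [Set.mem_setOf_eq]
  refine imp_congr (exists_congr fun z => and_congr_right fun hz => (hle z hz).symm) ?_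
  refine forall_congr' fun z => forall_congr' fun hz => exists_congr fun z' =>
    and_congr_right fun hz' => ?_
  rw [hle z' hz', hd z hz z' hz']

theorem tprod_ofFn (hc : ∀ x y : T, x * y = y * x) : ∀ {n : ℕ} (f g : Fin n → T),
    (∀ i, TAssoc (f i) (g i)) → TAssoc (List.ofFn f).prod (List.ofFn g).prod
  | 0, f, g, _ => by simpa using tassoc_refl _
  | n + 1, f, g, h => by
    obtain ⟨ε, η, h1⟩ := h 0
    obtain ⟨ε', η', h2⟩ := tprod_ofFn hc (fun i : Fin n => f i.succ) (fun i : Fin n => g i.succ)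
      (fun i => h i.succ)
    refine ⟨ε * η, ε' * η', ?_⟩
    simp only [List.ofFn_succ, List.prod_cons, h1, h2, Units.val_mul]
    generalize (List.ofFn fun i : Fin n => f i.succ).prod = P
    generalize f 0 = F
    have e1 : F * ((η : T) * ((ε' : T) * P * (η' : T)))
        = (η : T) * (F * P * ((ε' : T) * (η' : T))) := by
      rw [hc (ε' : T) P, ← mul_assoc F, hc F (η : T)]
      simp only [mul_assoc]
    calc (ε : T) * F * (η : T) * ((ε' : T) * P * (η' : T))
        = (ε : T) * (F * ((η : T) * ((ε' : T) * P * (η' : T)))) := by simp only [mul_assoc]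
      _ = (ε : T) * ((η : T) * (F * P * ((ε' : T) * (η' : T)))) := by rw [e1]
      _ = _ := by simp only [mul_assoc]

theorem map_prod_ofFn (φ : H →* T) {n : ℕ} (u : Fin n → H) :
    φ (List.ofFn u).prod = (List.ofFn fun i => φ (u i)).prod := by
  rw [map_list_prod, List.map_ofFn]; rfl

theorem omegaEl_mem {M : Type*} [Monoid M] (a b : M) :
    ∀ (n : ℕ) (u : Fin n → M), (∀ i, MAtom (u i)) →
    a = (List.ofFn u).prod → dvdP b a →
    ∃ k : ℕ, (k : ℕ∞) ≤ omegaEl a b ∧ ∃ σ : Fin k ↪ Fin n,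
      dvdP b (List.ofFn fun i => u (σ i)).prod :=
  csInf_mem (s := {N : ℕ∞ | ∀ (n : ℕ) (u : Fin n → M), (∀ i, MAtom (u i)) →
    a = (List.ofFn u).prod → dvdP b a →
    ∃ k : ℕ, (k : ℕ∞) ≤ N ∧ ∃ σ : Fin k ↪ Fin n,
      dvdP b (List.ofFn fun i => u (σ i)).prod})
    ⟨⊤, fun n u _ ha hb => ⟨n, le_top, Function.Embedding.refl _, by
      simpa [← ha] using hb⟩⟩

theorem omegaEl'_mem {M : Type*} [Monoid M] (a b : M) :
    ∀ (n : ℕ) (u : Fin n → M),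
    a = (List.ofFn u).prod → dvdP b a →
    ∃ k : ℕ, (k : ℕ∞) ≤ omegaEl' a b ∧ ∃ σ : Fin k ↪ Fin n,
      dvdP b (List.ofFn fun i => u (σ i)).prod :=
  csInf_mem (s := {N : ℕ∞ | ∀ (n : ℕ) (u : Fin n → M),
    a = (List.ofFn u).prod → dvdP b a →
    ∃ k : ℕ, (k : ℕ∞) ≤ N ∧ ∃ σ : Fin k ↪ Fin n,
      dvdP b (List.ofFn fun i => u (σ i)).prod})
    ⟨⊤, fun n u ha hb => ⟨n, le_top, Function.Embedding.refl _, by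
      simpa [← ha] using hb⟩⟩

theorem omegaH_congr {M : Type*} [Monoid M] {b b' : M} (h : TAssoc b b') :
    omegaH b = omegaH b' := by
  simp only [omegaH, omegaEl, fun x : M => dvdP_congr h (tassoc_refl x)]

theorem omegaH'_congr {M : Type*} [Monoid M] {b b' : M} (h : TAssoc b b') :
    omegaH' b = omegaH' b' := by
  simp only [omegaH', omegaEl', fun x : M => dvdP_congr h (tassoc_refl x)]

theorem omegaH_le (hT : Atomic T) (φ : H →* T) (hw : IsWeakTransferHom φ)
    (hi : IsIsoatomic φ) (a : H) : omegaH a ≤ omegaH (φ a) := by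
  refine iSup_le fun c => le_trans ?_ (le_iSup (fun t => omegaEl t (φ a)) (φ c))
  refine sInf_le ?_
  intro n u hu hc hd
  obtain ⟨k, hk, σ, h⟩ := omegaEl_mem (φ c) (φ a) n (fun i => φ (u i))
    (fun i => map_matom hT φ hw (hu i)) (by rw [hc, map_prod_ofFn])
    ((dvdP_map_iff hT φ hw hi _ _).1 hd)
  refine ⟨k, hk, σ, (dvdP_map_iff hT φ hw hi _ _).2 ?_⟩
  rw [map_prod_ofFn]; exact h

theorem omegaH'_le (hT : Atomic T) (φ : H →* T) (hw : IsWeakTransferHom φ)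
    (hi : IsIsoatomic φ) (a : H) : omegaH' a ≤ omegaH' (φ a) := by
  refine iSup_le fun c => le_trans ?_ (le_iSup (fun t => omegaEl' t (φ a)) (φ c))
  refine sInf_le ?_
  intro n u hc hd
  obtain ⟨k, hk, σ, h⟩ := omegaEl'_mem (φ c) (φ a) n (fun i => φ (u i))
    (by rw [hc, map_prod_ofFn]) ((dvdP_map_iff hT φ hw hi _ _).1 hd)
  refine ⟨k, hk, σ, (dvdP_map_iff hT φ hw hi _ _).2 ?_⟩
  rw [map_prod_ofFn]; exact h

theorem omegaH_ge (hT : Atomic T) (φ : H →* T) (hw : IsWeakTransferHom φ)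
    (hi : IsIsoatomic φ) (hc : ∀ x y : T, x * y = y * x) (a : H) :
    omegaH (φ a) ≤ omegaH a := by
  refine iSup_le fun t => sInf_le ?_
  intro n v hv ht hd
  choose u hu huv using fun i => exists_atom_lift φ hw (hv i)
  have h1 : TAssoc (φ (List.ofFn u).prod) t := by
    rw [map_prod_ofFn, ht]; exact tprod_ofFn hc _ _ huv
  obtain ⟨k, hk, σ, h⟩ := omegaEl_mem (List.ofFn u).prod a n u hu rfl
    ((dvdP_map_iff hT φ hw hi _ _).2
      ((dvdP_congr (tassoc_refl _) h1).2 hd))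
  refine ⟨k, hk.trans (le_iSup (fun c => omegaEl c a) _), σ, ?_⟩
  refine (dvdP_congr (tassoc_refl _) ?_).1 ((dvdP_map_iff hT φ hw hi _ _).1 h)
  rw [map_prod_ofFn]; exact tprod_ofFn hc _ _ (fun i => huv (σ i))

theorem omegaH'_ge (hT : Atomic T) (φ : H →* T) (hw : IsWeakTransferHom φ)
    (hi : IsIsoatomic φ) (hc : ∀ x y : T, x * y = y * x) (a : H) :
    omegaH' (φ a) ≤ omegaH' a := by
  refine iSup_le fun t => sInf_le ?_
  intro n v ht hd
  choose u huv using fun i => exists_lift φ hw (v i)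
  have h1 : TAssoc (φ (List.ofFn u).prod) t := by
    rw [map_prod_ofFn, ht]; exact tprod_ofFn hc _ _ huv
  obtain ⟨k, hk, σ, h⟩ := omegaEl'_mem (List.ofFn u).prod a n u rfl
    ((dvdP_map_iff hT φ hw hi _ _).2
      ((dvdP_congr (tassoc_refl _) h1).2 hd))
  refine ⟨k, hk.trans (le_iSup (fun c => omegaEl' c a) _), σ, ?_⟩
  refine (dvdP_congr (tassoc_refl _) ?_).1 ((dvdP_map_iff hT φ hw hi _ _).1 h)
  rw [map_prod_ofFn]; exact tprod_ofFn hc _ _ (fun i => huv (σ i))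

end Hom

end IsoatomicHelpers

/-- An isoatomic weak transfer homomorphism `φ : H → T` between atomic
cancellative monoids preserves divisibility up to permutation (on permutable
factorizations and on elements), the `ω_p`- and `ω_p'`-invariants (with equality when `T`
is commutative), and the permutable tame degrees. -/
theorem isoatomic_weakTransfer_preserves_invariants {H T : Type*}
    [CancelMonoid H] [CancelMonoid T] (hH : Atomic H) (hT : Atomic T)
    (φ : H →* T) (hw : IsWeakTransferHom φ) (hi : IsIsoatomic φ) :
    (∀ s s' : Multiset (AClass H), (∃ a : H, s ∈ ZpSet a) → (∃ b : H, s' ∈ ZpSet b) →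
      (s ≤ s' ↔ s.map (mapCls φ) ≤ s'.map (mapCls φ))) ∧
    (∀ a b : H, dvdP a b ↔ dvdP (φ a) (φ b)) ∧
    ((∀ a : H, omegaH a ≤ omegaH (φ a)) ∧ (∀ a : H, omegaH' a ≤ omegaH' (φ a)) ∧
      ((∀ x y : T, x * y = y * x) →
        (∀ a : H, omegaH a = omegaH (φ a)) ∧ (∀ a : H, omegaH' a = omegaH' (φ a)) ∧
          omegaMon H = omegaMon T ∧ omegaMon' H = omegaMon' T)) ∧
    ((∀ (a : H) (x : Multiset (AClass H)), (∃ b : H, x ∈ ZpSet b) →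
        tpEl a x = tpEl (φ a) (x.map (mapCls φ))) ∧
      tpMon H = tpMon T) := by
  have hEq : (∀ x y : T, x * y = y * x) → ∀ a : H, omegaH a = omegaH (φ a) := fun hc a =>
    le_antisymm (omegaH_le hT φ hw hi a) (omegaH_ge hT φ hw hi hc a)
  have hEq' : (∀ x y : T, x * y = y * x) → ∀ a : H, omegaH' a = omegaH' (φ a) := fun hc a =>
    le_antisymm (omegaH'_le hT φ hw hi a) (omegaH'_ge hT φ hw hi hc a)
  refine ⟨?_, dvdP_map_iff hT φ hw hi, ⟨omegaH_le hT φ hw hi, omegaH'_le hT φ hw hi,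
    fun hc => ⟨hEq hc, hEq' hc, ?_, ?_⟩⟩, ?_, ?_⟩
  · rintro s s' ⟨a, hs⟩ ⟨b, hs'⟩
    obtain ⟨g, hg⟩ := exists_leftInv φ hi
    exact map_le_map_iff_leftInv (fun c hc => hg c (mem_atomCls hs c hc))
      (fun c hc => hg c (mem_atomCls hs' c hc))
  · apply le_antisymm
    · refine iSup₂_le fun u hu => ?_
      rw [hEq hc u]
      exact le_iSup₂ (f := fun (v : T) (_ : MAtom v) => omegaH v) (φ u) (map_matom hT φ hw hu)
    · refine iSup₂_le fun v hv => ?_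
      obtain ⟨u, hu, huv⟩ := exists_atom_lift φ hw hv
      rw [← omegaH_congr huv, ← hEq hc u]
      exact le_iSup₂ (f := fun (v : H) (_ : MAtom v) => omegaH v) u hu
  · apply le_antisymm
    · refine iSup₂_le fun u hu => ?_
      rw [hEq' hc u]
      exact le_iSup₂ (f := fun (v : T) (_ : MAtom v) => omegaH' v) (φ u) (map_matom hT φ hw hu)
    · refine iSup₂_le fun v hv => ?_
      obtain ⟨u, hu, huv⟩ := exists_atom_lift φ hw hv
      rw [← omegaH'_congr huv, ← hEq' hc u]
      exact le_iSup₂ (f := fun (v : H) (_ : MAtom v) => omegaH' v) u hu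
  · rintro a x ⟨b, hx⟩
    exact tpEl_map hT φ hw hi a x (mem_atomCls hx)
  · have key : ∀ (u a : H), MAtom u → tpEl a {mkCls u} = tpEl (φ a) {mkCls (φ u)} := by
      intro u a hu
      have := tpEl_map hT φ hw hi a {mkCls u} (by
        intro c hc
        rw [Multiset.mem_singleton] at hc
        exact ⟨u, hu, hc.symm⟩)
      rwa [Multiset.map_singleton, mapCls_mkCls] at this
    apply le_antisymm
    · refine iSup₂_le fun u hu => iSup_le fun a => ?_
      rw [key u a hu]
      exact le_trans (le_iSup (fun t => tpEl t {mkCls (φ u)}) (φ a))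
        (le_iSup₂ (f := fun (v : T) (_ : MAtom v) => ⨆ t : T, tpEl t {mkCls v}) (φ u)
          (map_matom hT φ hw hu))
    · refine iSup₂_le fun v hv => iSup_le fun t => ?_
      obtain ⟨u, hu, huv⟩ := exists_atom_lift φ hw hv
      obtain ⟨a, ha⟩ := exists_lift φ hw t
      have h1 : tpEl t {mkCls v} = tpEl a {mkCls u} := by
        rw [key u a hu, mkCls_eq_iff.2 huv]
        unfold tpEl
        rw [zpSet_congr ha]
      rw [h1]
      exact le_trans (le_iSup (fun a => tpEl a {mkCls u}) a)
        (le_iSup₂ (f := fun (v : H) (_ : MAtom v) => ⨆ t : H, tpEl t {mkCls v}) u hu)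
end

section
/- Let D be a commutative atomic domain and n ≥ 1, and let T_n(D)^• be the multiplicative monoid of n×n upper triangular matrices over D with nonzero determinant. Then: (1) a matrix A = [a_{ij}] ∈ T_n(D)^• is an atom of T_n(D)^• if and only if there exists m ∈ {1, …, n} such that a_{ii} ∈ D^× for all i ≠ m and a_{mm} is an atom of D; (2) every atom A of T_n(D)^• whose non-unit diagonal entry sits in position (m,m) and equals (up to associates in D) an atom a of D is associated in T_n(D)^• to the diagonal matrix whose (m,m) entry is a and whose other diagonal entries are 1. -/
/-- The monoid of upper triangular `n × n` matrices over `D` with nonzero determinant. -/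
def TriMon (n : ℕ) (D : Type*) [CommRing D] [IsDomain D] :
    Submonoid (Matrix (Fin n) (Fin n) D) where
  carrier := {A | A.BlockTriangular id ∧ A.det ≠ 0}
  one_mem' := ⟨Matrix.blockTriangular_one, by simp⟩
  mul_mem' := by
    rintro A B ⟨hA, hdA⟩ ⟨hB, hdB⟩
    exact ⟨hA.mul hB, by rw [Matrix.det_mul]; exact mul_ne_zero hdA hdB⟩

/-- The monoid of `n × n` matrices over `D` with nonzero determinant. -/
def GLMon (n : ℕ) (D : Type*) [CommRing D] [IsDomain D] :
    Submonoid (Matrix (Fin n) (Fin n) D) where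
  carrier := {A | A.det ≠ 0}
  one_mem' := by simp
  mul_mem' := by
    intro A B hA hB
    simp only [Set.mem_setOf_eq, Matrix.det_mul] at *
    exact mul_ne_zero hA hB

/-- The monoid of nonzero elements of `D`. -/
def nzMon (D : Type*) [CommRing D] [IsDomain D] : Submonoid D where
  carrier := {a | a ≠ 0}
  one_mem' := one_ne_zero
  mul_mem' := fun ha hb => mul_ne_zero ha hb

/-- The determinant as a monoid homomorphism `M_n(D)^• → D \ {0}`. -/
def detHom (n : ℕ) (D : Type*) [CommRing D] [IsDomain D] :
    GLMon n D →* nzMon D where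
  toFun A := ⟨(A : Matrix (Fin n) (Fin n) D).det, A.2⟩
  map_one' := Subtype.ext (by simp)
  map_mul' := fun A B => Subtype.ext (by simp [Matrix.det_mul])

theorem tri_diag_mul {D : Type*} [CommRing D] {n : ℕ} {A B : Matrix (Fin n) (Fin n) D}
    (hA : A.BlockTriangular id) (hB : B.BlockTriangular id) (i : Fin n) :
    (A * B) i i = A i i * B i i := by
  rw [Matrix.mul_apply]
  refine Finset.sum_eq_single i ?_ (by simp)
  intro k _ hk
  rcases lt_or_gt_of_ne hk with h | h
  · rw [hA (show id k < id i from h), zero_mul]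
  · rw [hB (show id i < id k from h), mul_zero]

theorem tri_mem_iff {D : Type*} [CommRing D] [IsDomain D] {n : ℕ}
    {A : Matrix (Fin n) (Fin n) D} (hA : A.BlockTriangular id) :
    A ∈ TriMon n D ↔ ∀ i, A i i ≠ 0 := by
  change (A.BlockTriangular id ∧ A.det ≠ 0) ↔ _
  rw [Matrix.det_of_upperTriangular hA, Finset.prod_ne_zero_iff]
  simp [hA]

theorem tri_isUnit_iff {D : Type*} [CommRing D] [IsDomain D] {n : ℕ} (A : TriMon n D) :
    IsUnit A ↔ ∀ i, IsUnit ((A : Matrix (Fin n) (Fin n) D) i i) := by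
  constructor
  · rintro ⟨u, rfl⟩ i
    have h : ((u : TriMon n D) : Matrix (Fin n) (Fin n) D) * ((u⁻¹ : (TriMon n D)ˣ) : TriMon n D) = 1 := by
      rw [← Submonoid.coe_mul, u.mul_inv]; rfl
    have h2 := tri_diag_mul (u : TriMon n D).2.1 ((u⁻¹ : (TriMon n D)ˣ) : TriMon n D).2.1 i
    rw [h, Matrix.one_apply_eq] at h2
    exact IsUnit.of_mul_eq_one _ h2.symm
  · intro h
    obtain ⟨A, hA, hd⟩ := A
    have hu : IsUnit A.det := by
      rw [Matrix.det_of_upperTriangular hA]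
      exact (Finset.univ.prod_induction _ IsUnit (fun _ _ => IsUnit.mul) isUnit_one
        (fun i _ => h i))
    have hiA : IsUnit A := (Matrix.isUnit_iff_isUnit_det A).2 hu
    haveI : Invertible A := hiA.invertible
    have hinv : A⁻¹.BlockTriangular id := Matrix.blockTriangular_inv_of_blockTriangular hA
    have hdi : A⁻¹.det ≠ 0 := ((Matrix.isUnit_nonsing_inv_det_iff).2 hu).ne_zero
    exact ⟨⟨⟨A, hA, hd⟩, ⟨A⁻¹, hinv, hdi⟩,
      Subtype.ext (Matrix.mul_nonsing_inv A hu), Subtype.ext (Matrix.nonsing_inv_mul A hu)⟩, rfl⟩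

def triL {D : Type*} [CommRing D] {n : ℕ} (A : Matrix (Fin n) (Fin n) D) (m : Fin n) (b : D) :
    Matrix (Fin n) (Fin n) D := fun i j =>
  if i < m then (if i = j then 1 else 0) else if i = m ∧ j = m then b else A i j

def triR {D : Type*} [CommRing D] {n : ℕ} (A : Matrix (Fin n) (Fin n) D) (m : Fin n) (c : D) :
    Matrix (Fin n) (Fin n) D := fun i j =>
  if i < m then A i j else if i = m ∧ j = m then c else (if i = j then 1 else 0)

theorem triL_tri {D : Type*} [CommRing D] {n : ℕ} {A : Matrix (Fin n) (Fin n) D}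
    (hA : A.BlockTriangular id) (m : Fin n) (b : D) : (triL A m b).BlockTriangular id := by
  intro i j hij
  have h0 := hA hij
  change j < i at hij
  unfold triL
  grind

theorem triR_tri {D : Type*} [CommRing D] {n : ℕ} {A : Matrix (Fin n) (Fin n) D}
    (hA : A.BlockTriangular id) (m : Fin n) (b : D) : (triR A m b).BlockTriangular id := by
  intro i j hij
  have h0 := hA hij
  change j < i at hij
  unfold triR
  grind

theorem triL_mul_triR {D : Type*} [CommRing D] {n : ℕ} {A : Matrix (Fin n) (Fin n) D}
    (hA : A.BlockTriangular id) (m : Fin n) (b c : D) (h : A m m = b * c) :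
    triL A m b * triR A m c = A := by
  ext i j
  have hA' : ∀ i j, j < i → A i j = 0 := fun i j h => hA (show id j < id i from h)
  rw [Matrix.mul_apply]
  by_cases him : i < m
  · rw [Finset.sum_eq_single i]
    · simp [triL, triR, him]
    · intro k _ hk
      simp [triL, him, hk.symm]
    · simp
  · rw [Finset.sum_eq_single j]
    · have := hA' i j
      unfold triL triR
      grind
    · intro k _ hk
      have := hA' i k
      unfold triL triR
      grind
    · simp

theorem tri_factor {D : Type*} [CommRing D] [IsDomain D] {n : ℕ} (A : TriMon n D) (m : Fin n)
    (b c : D) (h : (A : Matrix (Fin n) (Fin n) D) m m = b * c) :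
    ∃ (hB : triL A.1 m b ∈ TriMon n D) (hC : triR A.1 m c ∈ TriMon n D),
      A = (⟨_, hB⟩ : TriMon n D) * ⟨_, hC⟩ := by
  have hne := (tri_mem_iff A.2.1).1 A.2
  have hm := hne m
  rw [h] at hm
  have hb := left_ne_zero_of_mul hm
  have hc := right_ne_zero_of_mul hm
  refine ⟨(tri_mem_iff (triL_tri A.2.1 m b)).2 ?_, (tri_mem_iff (triR_tri A.2.1 m c)).2 ?_,
    Subtype.ext (triL_mul_triR A.2.1 m b c h).symm⟩
  · intro i
    have := hne i
    have h1 : (1 : D) ≠ 0 := one_ne_zero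
    unfold triL
    grind
  · intro i
    have := hne i
    have h1 : (1 : D) ≠ 0 := one_ne_zero
    unfold triR
    grind

theorem tri_atom_split {D : Type*} [CommRing D] [IsDomain D] {n : ℕ} {A : TriMon n D}
    (hA : MAtom A) (m : Fin n) (b c : D) (h : (A : Matrix (Fin n) (Fin n) D) m m = b * c) :
    (IsUnit b ∧ ∀ i, m < i → IsUnit ((A : Matrix (Fin n) (Fin n) D) i i)) ∨ IsUnit c := by
  obtain ⟨hB, hC, hBC⟩ := tri_factor A m b c h
  rcases hA.2 _ _ hBC with hu | hu
  · left
    rw [tri_isUnit_iff] at hu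
    refine ⟨by simpa [triL] using hu m, fun i hi => ?_⟩
    simpa [triL, hi.not_gt, hi.ne'] using hu i
  · right
    rw [tri_isUnit_iff] at hu
    simpa [triR] using hu m

theorem tri_atom_iff {D : Type*} [CommRing D] [IsDomain D] {n : ℕ} (A : TriMon n D) :
    MAtom A ↔
      ∃ m : Fin n, (∀ i : Fin n, i ≠ m → IsUnit ((A : Matrix (Fin n) (Fin n) D) i i)) ∧
        Irreducible ((A : Matrix (Fin n) (Fin n) D) m m) := by
  constructor
  · intro hA
    have h1 := hA.1
    rw [tri_isUnit_iff] at h1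
    push Not at h1
    obtain ⟨m, hm⟩ := h1
    have key : ∀ k, ¬ IsUnit ((A : Matrix (Fin n) (Fin n) D) k k) →
        ∀ i, k < i → IsUnit ((A : Matrix (Fin n) (Fin n) D) i i) := by
      intro k hk
      rcases tri_atom_split hA k 1 _ (one_mul _).symm with h | h
      · exact h.2
      · exact absurd h hk
    refine ⟨m, fun i hi => ?_, ⟨hm, fun b c h => ?_⟩⟩
    · rcases lt_or_gt_of_ne hi with h | h
      · by_contra hu
        exact hm (key i hu m h)
      · exact key m hm i h
    · exact (tri_atom_split hA m b c h).imp And.left id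
  · rintro ⟨m, hu, hirr⟩
    refine ⟨fun h => hirr.not_isUnit ((tri_isUnit_iff A).1 h m), ?_⟩
    intro B C h
    have hd : ∀ i, A.1 i i = B.1 i i * C.1 i i := by
      intro i
      rw [h]
      exact tri_diag_mul B.2.1 C.2.1 i
    rw [tri_isUnit_iff, tri_isUnit_iff]
    have hu2 : ∀ i, i ≠ m → IsUnit (B.1 i i) ∧ IsUnit (C.1 i i) := by
      intro i hi
      have := hu i hi
      rw [hd i] at this
      exact IsUnit.mul_iff.1 this
    refine (hirr.isUnit_or_isUnit (hd m)).imp (fun hb i => ?_) (fun hb i => ?_)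
    · by_cases hi : i = m
      · rw [hi]; exact hb
      · exact (hu2 i hi).1
    · by_cases hi : i = m
      · rw [hi]; exact hb
      · exact (hu2 i hi).2

/-- For a commutative atomic domain `D`: a matrix in `T_n(D)^•` is an
atom iff exactly one diagonal entry is a non-unit and that entry is an atom of `D`; and
every atom whose non-unit diagonal entry sits at `(m, m)` and is associated to an atom
`a` of `D` is associated to the corresponding diagonal matrix. -/
theorem triangular_atoms {D : Type*} [CommRing D] [IsDomain D]
    (hD : ∀ a : D, a ≠ 0 → ¬ IsUnit a →
      ∃ l : List D, (∀ p ∈ l, Irreducible p) ∧ a = l.prod)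
    (n : ℕ) (hn : 1 ≤ n) :
    (∀ A : TriMon n D, MAtom A ↔
      ∃ m : Fin n, (∀ i : Fin n, i ≠ m → IsUnit ((A : Matrix (Fin n) (Fin n) D) i i)) ∧
        Irreducible ((A : Matrix (Fin n) (Fin n) D) m m)) ∧
    (∀ (A : TriMon n D) (m : Fin n) (a : D), MAtom A →
      ¬ IsUnit ((A : Matrix (Fin n) (Fin n) D) m m) → Irreducible a →
      Associated ((A : Matrix (Fin n) (Fin n) D) m m) a →
      ∃ hmem : (Matrix.diagonal fun i => if i = m then a else 1) ∈ TriMon n D,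
        TAssoc A ⟨Matrix.diagonal fun i => if i = m then a else 1, hmem⟩) := by
  refine ⟨tri_atom_iff, ?_⟩
  intro A m a hA hm ha hassoc
  have hunits : ∀ i, i ≠ m → IsUnit (A.1 i i) := by
    obtain ⟨m', h', -⟩ := (tri_atom_iff A).1 hA
    have hmm : m = m' := by
      by_contra hne
      exact hm (h' m hne)
    rw [hmm]; exact h'
  have hmem : (Matrix.diagonal fun i => if i = m then a else 1) ∈ TriMon n D := by
    refine (tri_mem_iff (Matrix.blockTriangular_diagonal _)).2 fun i => ?_
    have := ha.ne_zero
    by_cases hi : i = m <;> simp [hi, this]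
  refine ⟨hmem, ?_⟩
  obtain ⟨u, hu⟩ := hassoc.symm
  obtain ⟨hB, hC, hBC⟩ := tri_factor A m (u : D) a (by rw [← hu, mul_comm])
  have hR1 : triR A.1 m 1 ∈ TriMon n D := by
    refine (tri_mem_iff (triR_tri A.2.1 m 1)).2 fun i => ?_
    have := (tri_mem_iff A.2.1).1 A.2 i
    have h1 : (1 : D) ≠ 0 := one_ne_zero
    unfold triR
    grind
  have hBu : IsUnit (⟨_, hB⟩ : TriMon n D) := by
    rw [tri_isUnit_iff]
    intro i
    have h1 := hunits i
    have h2 := u.isUnit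
    have h3 : IsUnit (1 : D) := isUnit_one
    simp only [triL]
    grind
  have hRu : IsUnit (⟨_, hR1⟩ : TriMon n D) := by
    rw [tri_isUnit_iff]
    intro i
    have h1 := hunits i
    have h3 : IsUnit (1 : D) := isUnit_one
    simp only [triR]
    grind
  have hCR : (⟨_, hC⟩ : TriMon n D) =
      ⟨Matrix.diagonal fun i => if i = m then a else 1, hmem⟩ * ⟨_, hR1⟩ := by
    apply Subtype.ext
    change triR A.1 m a = Matrix.diagonal _ * triR A.1 m 1
    ext i j
    rw [Matrix.diagonal_mul]
    unfold triR
    grind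
  obtain ⟨P, hP⟩ := hBu
  obtain ⟨Q, hQ⟩ := hRu
  refine ⟨P⁻¹, Q⁻¹, ?_⟩
  rw [hCR, ← hP, ← hQ] at hBC
  conv_rhs => rw [hBC]
  simp [mul_assoc]
end

section
/- Let D be a commutative principal ideal domain and n ≥ 1, and let M_n(D)^• denote the multiplicative monoid of n×n matrices over D with nonzero determinant (equivalently, the non zero-divisors of the matrix ring M_n(D)). Then the determinant map det: M_n(D)^• → D \ {0} is an isoatomic transfer homomorphism. In particular, a matrix A ∈ M_n(D)^• is an atom of M_n(D)^• if and only if det(A) is a prime element of D. -/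
section Helpers

open Matrix Module

variable {D : Type*} [CommRing D] [IsDomain D]

theorem aux_smith [IsPrincipalIdealRing D] {n : ℕ} (A : Matrix (Fin n) (Fin n) D)
    (hA : A.det ≠ 0) :
    ∃ (U V : Matrix (Fin n) (Fin n) D) (d : Fin n → D),
      IsUnit U ∧ IsUnit V ∧ A = U * diagonal d * V := by
  classical
  have hinj : Function.Injective (toLin' A) := by
    rw [← LinearMap.ker_eq_bot, LinearMap.ker_eq_bot']
    intro v hv
    exact eq_zero_of_mulVec_eq_zero hA (by simpa using hv)
  let e := LinearEquiv.ofInjective (toLin' A) hinj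
  let std := Pi.basisFun D (Fin n)
  obtain ⟨b', a, ab', h⟩ := Submodule.exists_smith_normal_form_of_rank_eq
    (N := LinearMap.range (toLin' A)) std e.finrank_eq.symm
  let c : Basis (Fin n) D (Fin n → D) := ab'.map e.symm
  have hc : ∀ i, toLin' A (c i) = a i • b' i := by
    intro i
    rw [← h i]
    have : e (c i) = ab' i := by simp [c]
    rw [← this]
    rfl
  refine ⟨std.toMatrix b', c.toMatrix std, a, ?_, ?_, ?_⟩
  · exact IsUnit.of_mul_eq_one _ (Basis.toMatrix_mul_toMatrix_flip std b')
  · exact IsUnit.of_mul_eq_one _ (Basis.toMatrix_mul_toMatrix_flip c std)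
  · have hd : diagonal a = LinearMap.toMatrix c b' (toLin' A) := by
      ext i j
      rw [LinearMap.toMatrix_apply, hc]
      simp only [map_smul, Basis.repr_self, Finsupp.smul_apply, Finsupp.single_apply,
        diagonal_apply, smul_eq_mul]
      by_cases hij : i = j
      · subst hij; simp
      · simp [hij, Ne.symm hij]
    rw [hd, basis_toMatrix_mul_linearMap_toMatrix_mul_basis_toMatrix]
    change A = LinearMap.toMatrix' (toLin' A)
    simp

theorem aux_split [IsPrincipalIdealRing D] {ι : Type*} (s : Finset ι) (d : ι → D) :
    ∀ b : D, b ∣ ∏ i ∈ s, d i → ∃ e : ι → D, (∀ i ∈ s, e i ∣ d i) ∧ ∏ i ∈ s, e i ∣ b ∧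
      b ∣ ∏ i ∈ s, e i := by
  classical
  induction s using Finset.induction_on with
  | empty => intro b hb; exact ⟨1, by simp, by simp, by simpa using hb⟩
  | insert x s hx ih =>
    intro b hb
    rw [Finset.prod_insert hx] at hb
    obtain ⟨b₁, b₂, h1, h2, rfl⟩ := exists_dvd_and_dvd_of_dvd_mul hb
    obtain ⟨e, he, h3, h4⟩ := ih b₂ h2
    have hp : ∏ i ∈ s, Function.update e x b₁ i = ∏ i ∈ s, e i :=
      Finset.prod_congr rfl fun i hi => by
        rw [Function.update_of_ne]; rintro rfl; exact hx hi
    refine ⟨Function.update e x b₁, ?_, ?_, ?_⟩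
    · intro i hi
      by_cases hix : i = x
      · subst hix; simpa using h1
      · rw [Function.update_of_ne hix]
        exact he i ((Finset.mem_insert.1 hi).resolve_left hix)
    · rw [Finset.prod_insert hx, hp]; simpa using mul_dvd_mul_left b₁ h3
    · rw [Finset.prod_insert hx, hp]; simpa using mul_dvd_mul_left b₁ h4

theorem aux_nz (x : nzMon D) : IsUnit x ↔ IsUnit (x : D) := by
  constructor
  · exact fun h => h.map (nzMon D).subtype
  · rintro ⟨u, hu⟩
    refine IsUnit.of_mul_eq_one (⟨(↑u⁻¹ : D), u⁻¹.ne_zero⟩ : nzMon D) (Subtype.ext ?_)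
    change (x : D) * ↑u⁻¹ = 1
    rw [← hu]; simp

theorem aux_gl {n : ℕ} (A : GLMon n D) :
    IsUnit A ↔ IsUnit (A : Matrix (Fin n) (Fin n) D) := by
  constructor
  · exact fun h => h.map (GLMon n D).subtype
  · rintro ⟨u, hu⟩
    have hd : ((↑u⁻¹ : Matrix (Fin n) (Fin n) D)).det ≠ 0 :=
      ((isUnit_iff_isUnit_det _).1 u⁻¹.isUnit).ne_zero
    have h1 : A * (⟨↑u⁻¹, hd⟩ : GLMon n D) = 1 := Subtype.ext (by
      change (A : Matrix (Fin n) (Fin n) D) * (↑u⁻¹ : Matrix (Fin n) (Fin n) D) = 1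
      rw [← hu]; simp)
    have h2 : (⟨↑u⁻¹, hd⟩ : GLMon n D) * A = 1 := Subtype.ext (by
      change (↑u⁻¹ : Matrix (Fin n) (Fin n) D) * (A : Matrix (Fin n) (Fin n) D) = 1
      rw [← hu]; simp)
    exact ⟨⟨A, _, h1, h2⟩, rfl⟩

theorem aux_unit {n : ℕ} (A : GLMon n D) : IsUnit (detHom n D A) ↔ IsUnit A := by
  rw [aux_nz, aux_gl, isUnit_iff_isUnit_det]; rfl

theorem aux_transfer [IsPrincipalIdealRing D] (n : ℕ) (hn : 1 ≤ n) :
    IsTransferHom (detHom n D) := by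
  refine ⟨⟨?_, aux_unit⟩, ?_⟩
  · intro t
    have hd : (diagonal (Function.update (1 : Fin n → D) ⟨0, hn⟩ (t : D))).det = t := by
      rw [det_diagonal, Finset.prod_update_of_mem (Finset.mem_univ _)]; simp
    refine ⟨1, 1, ⟨diagonal (Function.update (1 : Fin n → D) ⟨0, hn⟩ (t : D)), ?_⟩, ?_⟩
    · change det _ ≠ 0
      rw [hd]; exact t.2
    · apply Subtype.ext
      simp only [Units.val_one, one_mul, mul_one]
      exact hd.symm
  · rintro ⟨A, hA⟩ ⟨b₁, hb₁⟩ ⟨b₂, hb₂⟩ h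
    replace h : A.det = b₁ * b₂ := congrArg Subtype.val h
    obtain ⟨U, V, d, hU, hV, hUV⟩ := aux_smith A hA
    have hUd := (isUnit_iff_isUnit_det _).1 hU
    have hVd := (isUnit_iff_isUnit_det _).1 hV
    have hdet : A.det = U.det * (∏ i, d i) * V.det := by
      rw [hUV]; simp [det_mul, det_diagonal]
    have hdvd : b₁ ∣ ∏ i, d i := by
      have : b₁ ∣ U.det * (∏ i, d i) * V.det := ⟨b₂, by rw [← hdet, h]⟩
      rwa [hVd.dvd_mul_right, hUd.dvd_mul_left] at this
    obtain ⟨e, he, h1, h2⟩ := aux_split Finset.univ d b₁ hdvd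
    choose f hf using fun i => he i (Finset.mem_univ i)
    obtain ⟨w, hw⟩ := associated_of_dvd_dvd h2 h1
    have hmul : A = (U * diagonal e) * (diagonal f * V) := by
      rw [hUV, mul_assoc, mul_assoc, ← mul_assoc (diagonal e), diagonal_mul_diagonal]
      congr
      ext i; exact hf i
    have hne : (U * diagonal e).det * (diagonal f * V).det ≠ 0 := by
      rw [← det_mul, ← hmul]; exact hA
    have hδ : IsUnit (⟨(w : D) * U.det, mul_ne_zero w.ne_zero hUd.ne_zero⟩ : nzMon D) :=
      (aux_nz _).2 (w.isUnit.mul hUd)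
    obtain ⟨δ, hδ⟩ := hδ
    have hd1 : (U * diagonal e).det = b₁ * ((δ : nzMon D) : D) := by
      rw [hδ, det_mul, det_diagonal, ← hw]; ring
    have hinv : ((δ : nzMon D) : D) * (((δ⁻¹ : (nzMon D)ˣ) : nzMon D) : D) = 1 :=
      congrArg Subtype.val (δ.mul_inv)
    refine ⟨⟨U * diagonal e, left_ne_zero_of_mul hne⟩,
      ⟨diagonal f * V, right_ne_zero_of_mul hne⟩, δ⁻¹, Subtype.ext hmul, Subtype.ext ?_,
      Subtype.ext ?_⟩
    · rw [inv_inv]; exact hd1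
    · change (diagonal f * V).det = (((δ⁻¹ : (nzMon D)ˣ) : nzMon D) : D) * b₂
      apply mul_left_cancel₀ (left_ne_zero_of_mul hne)
      rw [← det_mul, ← hmul, h, hd1]
      linear_combination (-(b₁ * b₂)) * hinv

theorem aux_atom [IsPrincipalIdealRing D] (n : ℕ) (hn : 1 ≤ n) (A : GLMon n D) :
    MAtom A ↔ Prime ((A : Matrix (Fin n) (Fin n) D).det) := by
  rw [← irreducible_iff_prime, irreducible_iff]
  have hu : ∀ B : GLMon n D, IsUnit B ↔ IsUnit (B : Matrix (Fin n) (Fin n) D).det :=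
    fun B => by rw [aux_gl, isUnit_iff_isUnit_det]
  constructor
  · rintro ⟨h1, h2⟩
    refine ⟨fun h => h1 ((hu A).2 h), ?_⟩
    intro a b hab
    have hne : a * b ≠ 0 := hab ▸ A.2
    obtain ⟨a₁, a₂, ε, h, e1, e2⟩ := (aux_transfer (D := D) n hn).2 A
      ⟨a, left_ne_zero_of_mul hne⟩ ⟨b, right_ne_zero_of_mul hne⟩ (Subtype.ext hab)
    rcases h2 _ _ h with h3 | h3
    · left
      rw [← aux_unit, e1, Units.isUnit_mul_units, aux_nz] at h3
      exact h3
    · right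
      rw [← aux_unit, e2, Units.isUnit_units_mul, aux_nz] at h3
      exact h3
  · rintro ⟨h1, h2⟩
    refine ⟨fun h => h1 ((hu A).1 h), ?_⟩
    rintro a b rfl
    rw [hu, hu]
    exact h2 (det_mul _ _)

theorem aux_diag_unit {n : ℕ} (d : Fin n → D) (h : ∀ i, IsUnit (d i)) :
    IsUnit (diagonal d) := by
  rw [isUnit_iff_isUnit_det, det_diagonal]
  exact IsUnit.prod_univ_iff.2 h

theorem aux_normal [IsPrincipalIdealRing D] {n : ℕ} (hn : 1 ≤ n)
    (A : Matrix (Fin n) (Fin n) D) (hA : Prime A.det) (q : D) (hq : Associated A.det q) :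
    ∃ U V : Matrix (Fin n) (Fin n) D, IsUnit U ∧ IsUnit V ∧
      A = U * diagonal (Function.update 1 ⟨0, hn⟩ q) * V := by
  obtain ⟨U, V, d, hU, hV, hUV⟩ := aux_smith A hA.ne_zero
  have hUd := (isUnit_iff_isUnit_det _).1 hU
  have hVd := (isUnit_iff_isUnit_det _).1 hV
  have hdet : A.det = U.det * (∏ i, d i) * V.det := by
    conv_lhs => rw [hUV]
    simp [det_mul, det_diagonal]
  have hqp : Prime q := hq.prime hA
  have has : Associated q (∏ i, d i) := by
    refine hq.symm.trans ?_
    rw [hdet]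
    exact (associated_mul_unit_left _ _ hVd).trans (associated_unit_mul_left _ _ hUd)
  obtain ⟨i, -, w, hw⟩ := hqp.exists_mem_finset_dvd has.dvd
  obtain ⟨z, hz⟩ := has
  have hrest : ∀ j, IsUnit (Function.update d i w j) := by
    rw [← IsUnit.prod_univ_iff, Finset.prod_update_of_mem (Finset.mem_univ _)]
    have : q * (w * ∏ x ∈ Finset.univ \ {i}, d x) = q * z := by
      rw [hz, ← mul_assoc, ← hw]
      exact (Finset.prod_eq_mul_prod_sdiff_singleton_of_mem (Finset.mem_univ i) d).symm
    rw [mul_left_cancel₀ hqp.ne_zero this]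
    exact z.isUnit
  have hfac : diagonal d = diagonal (Function.update 1 i q) *
      diagonal (Function.update d i w) := by
    rw [diagonal_mul_diagonal]
    congr 1
    ext j
    by_cases hj : j = i
    · subst hj; simpa using hw
    · simp [hj]
  let σ := Equiv.swap i ⟨0, hn⟩
  let P := σ.permMatrix D
  have hP : IsUnit P := by
    rw [isUnit_iff_isUnit_det, det_permutation]
    exact ((Equiv.Perm.sign σ).isUnit).map (Int.castRingHom D)
  have hPd : P * diagonal (Function.update 1 ⟨0, hn⟩ q) = diagonal (Function.update 1 i q) * P := by
    ext j k
    rw [mul_diagonal, diagonal_mul]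
    simp only [P, Equiv.Perm.permMatrix, PEquiv.toMatrix_apply, Equiv.toPEquiv_apply,
      Option.mem_def, Option.some.injEq, mul_comm]
    by_cases h : σ j = k
    · subst h
      by_cases hj : j = i
      · subst hj; simp [σ]
      · have : σ j ≠ ⟨0, hn⟩ := by
          intro h
          apply hj
          apply σ.injective
          rw [h]; simp [σ]
        simp [hj, this]
    · simp [h]
  obtain ⟨u, hu⟩ := hP
  refine ⟨U * P, (↑u⁻¹ : Matrix (Fin n) (Fin n) D) * diagonal (Function.update d i w) * V, hU.mul (hu ▸ u.isUnit),
    (u⁻¹.isUnit.mul (aux_diag_unit _ hrest)).mul hV, ?_⟩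
  have hPi : P * (↑u⁻¹ : Matrix (Fin n) (Fin n) D) = 1 := by rw [← hu]; simp
  rw [mul_assoc U P, hPd]
  calc A = U * diagonal d * V := hUV
    _ = U * (diagonal (Function.update 1 i q) * (P * (↑u⁻¹ : Matrix (Fin n) (Fin n) D)) *
        diagonal (Function.update d i w)) * V := by rw [hPi, mul_one, ← hfac]
    _ = _ := by simp only [mul_assoc]

theorem aux_iso [IsPrincipalIdealRing D] (n : ℕ) (hn : 1 ≤ n) : IsIsoatomic (detHom n D) := by
  rintro A B hA hB ⟨ε, η, h⟩
  rw [aux_atom n hn] at hA hB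
  have has : Associated (B : Matrix (Fin n) (Fin n) D).det (A : Matrix (Fin n) (Fin n) D).det := by
    have h' : (B : Matrix (Fin n) (Fin n) D).det = ((ε : nzMon D) : D) *
      (A : Matrix (Fin n) (Fin n) D).det * ((η : nzMon D) : D) := congrArg Subtype.val h
    rw [h']
    exact (associated_mul_unit_left _ _ ((aux_nz _).1 η.isUnit)).trans
      (associated_unit_mul_left _ _ ((aux_nz _).1 ε.isUnit))
  obtain ⟨U, V, ⟨U, rfl⟩, ⟨V, rfl⟩, h1⟩ := aux_normal hn _ hA _ (Associated.refl _)
  obtain ⟨U', V', ⟨U', rfl⟩, ⟨V', rfl⟩, h2⟩ := aux_normal hn _ hB _ has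
  have key : ∀ W : (Matrix (Fin n) (Fin n) D)ˣ, ∃ X : (GLMon n D)ˣ,
      ((X : GLMon n D) : Matrix (Fin n) (Fin n) D) = W := by
    intro W
    have hW : IsUnit (⟨W, ((isUnit_iff_isUnit_det _).1 W.isUnit).ne_zero⟩ : GLMon n D) :=
      (aux_gl _).2 W.isUnit
    obtain ⟨X, hX⟩ := hW
    exact ⟨X, by rw [hX]⟩
  obtain ⟨X, hX⟩ := key (U' * U⁻¹)
  obtain ⟨Y, hY⟩ := key (V⁻¹ * V')
  refine ⟨X, Y, Subtype.ext ?_⟩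
  change (B : Matrix (Fin n) (Fin n) D) = ((X : GLMon n D) : Matrix (Fin n) (Fin n) D) *
    (A : Matrix (Fin n) (Fin n) D) * ((Y : GLMon n D) : Matrix (Fin n) (Fin n) D)
  generalize diagonal (Function.update (1 : Fin n → D) ⟨0, hn⟩
    (A : Matrix (Fin n) (Fin n) D).det) = E at h1 h2
  rw [hX, hY, h1, h2]
  simp [mul_assoc]

end Helpers

/-- For a commutative PID `D` and `n ≥ 1`, the determinant
`det : M_n(D)^• → D \ {0}` is an isoatomic transfer homomorphism; in particular a matrix
with nonzero determinant is an atom iff its determinant is a prime element of `D`. -/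
theorem det_isTransferHom {D : Type*} [CommRing D] [IsDomain D]
    [IsPrincipalIdealRing D] (n : ℕ) (hn : 1 ≤ n) :
    IsTransferHom (detHom n D) ∧ IsIsoatomic (detHom n D) ∧
      ∀ A : GLMon n D, MAtom A ↔ Prime ((A : Matrix (Fin n) (Fin n) D).det) := by
  exact ⟨aux_transfer n hn, aux_iso n hn, aux_atom n hn⟩
end
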